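/- Let φ be a nonnegative measurable function on the Lorentz cone Λ₃ and let μ be the measure on the tube T_{Λ₃} given by dμ(x+iy) = φ(y) dx dy. Then there exists a constant C > 0 such that ∫_{T_{Λ₃}} |F(z)|² dμ(z) ≤ C ‖F‖²_{H²(T_{Λ₃})} for every F ∈ H²(T_{Λ₃}) if and only if φ is integrable on Λ₃, i.e. ∫_{Λ₃} φ(y) dy < ∞. -/

import Mathlib

open MeasureTheory Set
open scoped ENNReal NNReal

noncomputable section

/-- The Lorentz cone `Λ₃ = {y ∈ ℝ³ : y₁ + y₂ > 0, y₁² − y₂² − y₃² > 0}`. -/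
def Lambda3 : Set (Fin 3 → ℝ) :=
  {y | 0 < y 0 + y 1 ∧ 0 < (y 0) ^ 2 - (y 1) ^ 2 - (y 2) ^ 2}

/-- The tube domain `T_{Λ₃} = ℝ³ + iΛ₃ ⊂ ℂ³`. -/
def TLambda3 : Set (Fin 3 → ℂ) :=
  {z | (fun i => (z i).im) ∈ Lambda3}

/-- Square of the Hardy space `H²(T_{Λ₃})` norm:
`‖F‖² = sup_{y ∈ Λ₃} ∫_{ℝ³} |F(x+iy)|² dx`. -/
def hardyNormSq (F : (Fin 3 → ℂ) → ℂ) : ℝ≥0∞ :=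
  ⨆ y ∈ Lambda3,
    ∫⁻ x : Fin 3 → ℝ, (‖F (fun i => (x i : ℂ) + (y i : ℂ) * Complex.I)‖₊ : ℝ≥0∞) ^ 2

/-- The matrix of three linear functionals that are positive on the cone. -/
def MM : Matrix (Fin 3) (Fin 3) ℝ := !![1, 1, 0; 1, -1, 0; 1, 0, 1]

/-- The three functionals. -/
def ell (x : Fin 3 → ℝ) (i : Fin 3) : ℝ := ∑ j, MM i j * x j

/-- Test functions. -/
def testF (s : ℝ) (z : Fin 3 → ℂ) : ℂ :=
  ∏ i, ((∑ j, (MM i j : ℂ) * z j) + (s : ℂ) * Complex.I)⁻¹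

lemma ell_pos {y : Fin 3 → ℝ} (hy : y ∈ Lambda3) (i : Fin 3) : 0 < ell y i := by
  obtain ⟨h1, h2⟩ := hy
  have h3 : 0 < y 0 - y 1 := by
    by_contra h
    nlinarith [sq_nonneg (y 2)]
  have h4 : 0 < y 0 + y 2 := by
    by_contra h
    nlinarith [sq_nonneg (y 1)]
  fin_cases i <;> simp [ell, MM, Fin.sum_univ_three] <;> linarith

lemma testF_diff {s : ℝ} (hs : 0 < s) : DifferentiableOn ℂ (testF s) TLambda3 := by
  have key : ∀ i : Fin 3, DifferentiableOn ℂ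
      (fun z : Fin 3 → ℂ => ((∑ j, (MM i j : ℂ) * z j) + (s : ℂ) * Complex.I)⁻¹) TLambda3 := by
    intro i
    refine DifferentiableOn.fun_inv (by fun_prop) ?_
    intro z hz h
    have h1 := congrArg Complex.im h
    have hz2 : (fun i => (z i).im) ∈ Lambda3 := hz
    have h2 := ell_pos hz2 i
    simp [ell] at h1 h2
    linarith
  unfold testF
  simp only [Fin.prod_univ_three]
  exact ((key 0).mul (key 1)).mul (key 2)

lemma testF_norm (s : ℝ) (x y : Fin 3 → ℝ) :
    (‖testF s (fun i => (x i : ℂ) + (y i : ℂ) * Complex.I)‖₊ : ℝ≥0∞) ^ 2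
      = ENNReal.ofReal (∏ i, ((ell x i) ^ 2 + (ell y i + s) ^ 2)⁻¹) := by
  have h : ‖testF s (fun i => (x i : ℂ) + (y i : ℂ) * Complex.I)‖ ^ 2
      = ∏ i, ((ell x i) ^ 2 + (ell y i + s) ^ 2)⁻¹ := by
    unfold testF
    rw [norm_prod, ← Finset.prod_pow]
    refine Finset.prod_congr rfl fun i _ => ?_
    rw [norm_inv, inv_pow]
    congr 1
    have : (∑ j, (MM i j : ℂ) * ((x j : ℂ) + (y j : ℂ) * Complex.I)) + (s : ℂ) * Complex.I
        = ((ell x i : ℝ) : ℂ) + ((ell y i + s : ℝ) : ℂ) * Complex.I := by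
      simp only [ell, Fin.sum_univ_three]
      push_cast
      ring
    rw [this, ← Complex.normSq_eq_norm_sq, Complex.normSq_add_mul_I]
  rw [← h, ENNReal.ofReal_pow (norm_nonneg _), ofReal_norm]
  rfl

/-- The boundary integral. -/
def KK (s : ℝ) : ℝ≥0∞ := ∫⁻ x : Fin 3 → ℝ, ENNReal.ofReal (∏ i, ((ell x i) ^ 2 + s ^ 2)⁻¹)

lemma ell_cont (i : Fin 3) : Continuous (fun x => ell x i) := by
  unfold ell; fun_prop

lemma KK_one : KK 1 < ⊤ := by
  have hdet : MM.det = -2 := by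
    simp [MM, Matrix.det_fin_three]; norm_num
  have hi : Integrable (fun u : Fin 3 → ℝ => ∏ i, (1 + (u i) ^ 2)⁻¹) :=
    Integrable.fintype_prod (f := fun _ (t : ℝ) => (1 + t ^ 2)⁻¹)
      (fun _ => integrable_inv_one_add_sq)
  have hmap := Real.map_matrix_volume_pi_eq_smul_volume_pi (M := MM) (by rw [hdet]; norm_num)
  have hm : Measurable (fun u : Fin 3 → ℝ => ENNReal.ofReal (∏ i, (1 + (u i) ^ 2)⁻¹)) := by
    fun_prop
  have hK : KK 1 = ∫⁻ u, ENNReal.ofReal (∏ i, (1 + (u i) ^ 2)⁻¹)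
      ∂(Measure.map (Matrix.toLin' MM) volume) := by
    rw [lintegral_map hm (LinearMap.continuous_of_finiteDimensional _).measurable]
    unfold KK
    refine lintegral_congr fun x => ?_
    congr 1
    refine Finset.prod_congr rfl fun i _ => ?_
    simp [ell, Matrix.mulVec, dotProduct, add_comm]
  rw [hK, hmap, lintegral_smul_measure]
  exact ENNReal.mul_lt_top ENNReal.ofReal_lt_top hi.lintegral_lt_top

lemma KK_lt_top {s : ℝ} (hs : 1 ≤ s) : KK s < ⊤ := by
  refine lt_of_le_of_lt (lintegral_mono fun x => ENNReal.ofReal_le_ofReal ?_) KK_one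
  refine Finset.prod_le_prod (fun i _ => by positivity) fun i _ => ?_
  gcongr

lemma KK_ne_zero {s : ℝ} (hs : 0 < s) : KK s ≠ 0 := by
  unfold KK
  have hc : ∀ i, Measurable (fun x => ell x i) := fun i => (ell_cont i).measurable
  intro h
  rw [lintegral_eq_zero_iff' (by fun_prop)] at h
  have h2 : ∀ᵐ x : Fin 3 → ℝ, False := by
    filter_upwards [h] with x hx
    have : 0 < ∏ i, ((ell x i) ^ 2 + s ^ 2)⁻¹ := Finset.prod_pos fun i _ => by positivity
    simp only [Pi.zero_apply, ENNReal.ofReal_eq_zero] at hx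
    linarith
  exact h2.exists.elim fun _ hf => hf

lemma I_le {s : ℝ} (hs : 0 < s) {y : Fin 3 → ℝ} (hy : y ∈ Lambda3) :
    ∫⁻ x : Fin 3 → ℝ, (‖testF s (fun i => (x i : ℂ) + (y i : ℂ) * Complex.I)‖₊ : ℝ≥0∞) ^ 2
      ≤ KK s := by
  refine lintegral_mono fun x => ?_
  simp only [testF_norm]
  refine ENNReal.ofReal_le_ofReal ?_
  refine Finset.prod_le_prod (fun i _ => by positivity) fun i _ => ?_
  have := ell_pos hy i
  gcongr
  linarith

lemma le_I {s : ℝ} (hs : 0 < s) {y : Fin 3 → ℝ} (hy : y ∈ Lambda3) (hys : ∀ i, ell y i ≤ s) :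
    ENNReal.ofReal (1 / 64) * KK s ≤
    ∫⁻ x : Fin 3 → ℝ, (‖testF s (fun i => (x i : ℂ) + (y i : ℂ) * Complex.I)‖₊ : ℝ≥0∞) ^ 2 := by
  unfold KK
  rw [← lintegral_const_mul' _ _ ENNReal.ofReal_ne_top]
  refine lintegral_mono fun x => ?_
  simp only [testF_norm]
  rw [← ENNReal.ofReal_mul (by norm_num)]
  refine ENNReal.ofReal_le_ofReal ?_
  have : (1 / 64 : ℝ) = ∏ _i : Fin 3, (1 / 4 : ℝ) := by norm_num
  rw [this, ← Finset.prod_mul_distrib]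
  refine Finset.prod_le_prod (fun i _ => by positivity) fun i _ => ?_
  have h1 := ell_pos hy i
  have h2 := hys i
  have : (1 / 4 : ℝ) * ((ell x i) ^ 2 + s ^ 2)⁻¹ = (4 * ((ell x i) ^ 2 + s ^ 2))⁻¹ := by
    rw [mul_inv]; norm_num
  rw [this]
  gcongr
  nlinarith [sq_nonneg (ell x i)]

lemma meas_Lambda3 : MeasurableSet Lambda3 := by
  have : IsOpen Lambda3 := by
    have h1 : IsOpen {y : Fin 3 → ℝ | 0 < y 0 + y 1} := isOpen_lt (by fun_prop) (by fun_prop)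
    have h2 : IsOpen {y : Fin 3 → ℝ | 0 < (y 0) ^ 2 - (y 1) ^ 2 - (y 2) ^ 2} :=
      isOpen_lt (by fun_prop) (by fun_prop)
    exact h1.inter h2
  exact this.measurableSet

/-- for a nonnegative measurable `φ` on `Λ₃`, the measure
`dμ(x+iy) = φ(y) dx dy` on `T_{Λ₃}` is a Carleson measure for `H²(T_{Λ₃})`
(i.e. `∫_{T_{Λ₃}} |F|² dμ ≤ C‖F‖²_{H²}` for all `F ∈ H²`) iff `φ` is integrable on `Λ₃`. -/
theorem radial_carleson_iff_integrable
    (φ : (Fin 3 → ℝ) → ℝ) (hφm : Measurable φ) (hφ : ∀ y, 0 ≤ φ y) :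
    (∃ C : ℝ, 0 < C ∧ ∀ F : (Fin 3 → ℂ) → ℂ,
        DifferentiableOn ℂ F TLambda3 → hardyNormSq F < ⊤ →
        (∫⁻ y in Lambda3,
            (∫⁻ x : Fin 3 → ℝ,
              (‖F (fun i => (x i : ℂ) + (y i : ℂ) * Complex.I)‖₊ : ℝ≥0∞) ^ 2)
              * ENNReal.ofReal (φ y))
          ≤ ENNReal.ofReal C * hardyNormSq F)
    ↔ (∫⁻ y in Lambda3, ENNReal.ofReal (φ y)) < ⊤ := by
  constructor
  · rintro ⟨C, hC, H⟩
    let S : ℕ → Set (Fin 3 → ℝ) := fun n => Lambda3 ∩ {y | ∀ i, ell y i ≤ (n : ℝ) + 1}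
    have hSm : ∀ n, MeasurableSet (S n) := fun n => by
      refine meas_Lambda3.inter ?_
      rw [Set.ofPred_forall]
      exact MeasurableSet.iInter fun i =>
        measurableSet_le (ell_cont i).measurable measurable_const
    have hmono : Monotone S := by
      intro m n hmn y hy
      refine ⟨hy.1, fun i => (hy.2 i).trans ?_⟩
      have : (m : ℝ) ≤ n := by exact_mod_cast hmn
      linarith
    have hU : ⋃ n, S n = Lambda3 := by
      ext y
      simp only [mem_iUnion]
      refine ⟨fun ⟨n, h⟩ => h.1, fun h => ?_⟩
      obtain ⟨n, hn⟩ := exists_nat_ge (∑ i, |ell y i|)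
      refine ⟨n, h, fun i => ?_⟩
      have := Finset.single_le_sum (f := fun i => |ell y i|) (fun i _ => abs_nonneg _)
        (Finset.mem_univ i)
      have := le_abs_self (ell y i)
      linarith
    have hb : ∀ n, ∫⁻ y in S n, ENNReal.ofReal (φ y) ≤ ENNReal.ofReal (64 * C) := by
      intro n
      set s : ℝ := (n : ℝ) + 1 with hsdef
      have hs1 : 1 ≤ s := by simp [hsdef]
      have hs : 0 < s := by linarith
      have hle : hardyNormSq (testF s) ≤ KK s := iSup₂_le fun y hy => I_le hs hy
      have h1 := H (testF s) (testF_diff hs) (hle.trans_lt (KK_lt_top hs1))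
      have h2 : ENNReal.ofReal (1 / 64) * KK s * ∫⁻ y in S n, ENNReal.ofReal (φ y)
          ≤ ENNReal.ofReal C * KK s := by
        refine le_trans ?_ (h1.trans (by gcongr))
        rw [← lintegral_const_mul _ (by fun_prop)]
        refine le_trans ?_ (lintegral_mono_set (s := S n) inter_subset_left)
        refine setLIntegral_mono' (hSm n) fun y hy => ?_
        gcongr
        exact le_I hs hy.1 hy.2
      have h3 : KK s * (ENNReal.ofReal (1 / 64) * ∫⁻ y in S n, ENNReal.ofReal (φ y))
          ≤ KK s * ENNReal.ofReal C := by
        convert h2 using 1 <;> ring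
      rw [ENNReal.mul_le_mul_iff_right (KK_ne_zero hs) (KK_lt_top hs1).ne] at h3
      calc ∫⁻ y in S n, ENNReal.ofReal (φ y)
          = ENNReal.ofReal 64 * (ENNReal.ofReal (1 / 64) * ∫⁻ y in S n, ENNReal.ofReal (φ y)) := by
            rw [← mul_assoc, ← ENNReal.ofReal_mul (by norm_num)]
            norm_num
        _ ≤ ENNReal.ofReal 64 * ENNReal.ofReal C := by gcongr
        _ = _ := (ENNReal.ofReal_mul (by norm_num)).symm
    rw [← hU, setLIntegral_iUnion_of_directed _ (hmono.directed_le)]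
    exact (iSup_le hb).trans_lt ENNReal.ofReal_lt_top
  · intro h
    refine ⟨(∫⁻ y in Lambda3, ENNReal.ofReal (φ y)).toReal + 1, by positivity, ?_⟩
    intro F _ hF
    calc _ ≤ ∫⁻ y in Lambda3, hardyNormSq F * ENNReal.ofReal (φ y) := by
          refine setLIntegral_mono' meas_Lambda3 fun y hy => ?_
          gcongr
          exact le_iSup₂_of_le (f := fun y (_ : y ∈ Lambda3) => ∫⁻ x : Fin 3 → ℝ,
            (‖F (fun i => (x i : ℂ) + (y i : ℂ) * Complex.I)‖₊ : ℝ≥0∞) ^ 2) y hy le_rfl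
      _ = (∫⁻ y in Lambda3, ENNReal.ofReal (φ y)) * hardyNormSq F := by
          rw [lintegral_const_mul _ (by fun_prop), mul_comm]
      _ ≤ _ := by
          gcongr
          rw [← ENNReal.ofReal_toReal h.ne]
          refine ENNReal.ofReal_le_ofReal ?_
          rw [ENNReal.toReal_ofReal ENNReal.toReal_nonneg]
          linarith
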